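/- Every rule of SKS is derivable using only its dual rule, the general identity rule i↓, the general cut rule i↑ and the switch rule s. In particular, for every down rule ρ↓ of SKS, each instance of the corresponding up rule ρ↑ with premise C{P} and conclusion C{Q} can be replaced by a derivation from C{P} to C{Q} using only ρ↓, i↓, i↑ and s, and symmetrically for the down rules; the self-dual rules s and m are trivially derivable from themselves. -/

import Mathlib

/-!
Deep-inference systems SKSg, SKS and KS for classical propositional logic
(the calculus of structures).  Formulas are built from atoms `a`, their
negations `ā`, and the units `t` (true) and `f` (false) by disjunction
`[P,Q]` (`dis`) and conjunction `(P,Q)` (`con`), and are considered modulo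
the congruence `Equiv` generated by associativity, commutativity and the
unit laws.  Rules apply inside an arbitrary one-hole context and modulo the
equivalence.
-/

namespace DI

/-- Formulas of the calculus of structures for classical logic:
units `t`, `f`; atoms `pos a`; negated atoms `neg a`; disjunction `dis`
(written `[P,Q]`); conjunction `con` (written `(P,Q)`). -/
inductive F : Type where
  | tt  : F
  | ff  : F
  | pos : ℕ → F
  | neg : ℕ → F
  | dis : F → F → F
  | con : F → F → F
deriving DecidableEq

/-- Negation, pushed to the atoms by the De Morgan laws:
`¬t = f`, `¬f = t`, `¬[P,Q] = (¬P,¬Q)`, `¬(P,Q) = [¬P,¬Q]`, `¬¬P = P`. -/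
def F.negF : F → F
  | .tt => .ff
  | .ff => .tt
  | .pos a => .neg a
  | .neg a => .pos a
  | .dis P Q => .con P.negF Q.negF
  | .con P Q => .dis P.negF Q.negF

/-- Atoms are the propositional symbols and their negations. -/
def F.isAtom : F → Prop
  | .pos _ => True
  | .neg _ => True
  | _ => False

/-- Syntactic equivalence of formulas: the smallest congruence generated by
associativity and commutativity of both connectives and the unit laws
`[t,t]=t`, `(f,f)=f`, `[f,P]=P`, `(t,P)=P`. -/
inductive Equiv : F → F → Prop where
  | refl (P : F) : Equiv P P
  | symm {P Q : F} : Equiv P Q → Equiv Q P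
  | trans {P Q R : F} : Equiv P Q → Equiv Q R → Equiv P R
  | disComm (P Q : F) : Equiv (.dis P Q) (.dis Q P)
  | conComm (P Q : F) : Equiv (.con P Q) (.con Q P)
  | disAssoc (P Q R : F) : Equiv (.dis (.dis P Q) R) (.dis P (.dis Q R))
  | conAssoc (P Q R : F) : Equiv (.con (.con P Q) R) (.con P (.con Q R))
  | ttDis : Equiv (.dis .tt .tt) .tt
  | ffCon : Equiv (.con .ff .ff) .ff
  | ffDis (P : F) : Equiv (.dis .ff P) P
  | ttCon (P : F) : Equiv (.con .tt P) P
  | disCongr {P P' Q Q' : F} :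
      Equiv P P' → Equiv Q Q' → Equiv (.dis P Q) (.dis P' Q')
  | conCongr {P P' Q Q' : F} :
      Equiv P P' → Equiv Q Q' → Equiv (.con P Q) (.con P' Q')

/-- One-hole contexts. -/
inductive Ctx : Type where
  | hole : Ctx
  | disL : Ctx → F → Ctx
  | disR : F → Ctx → Ctx
  | conL : Ctx → F → Ctx
  | conR : F → Ctx → Ctx

/-- Plugging a formula into the hole of a context. -/
def Ctx.fill : Ctx → F → F
  | .hole, P => P
  | .disL C Q, P => .dis (C.fill P) Q
  | .disR Q C, P => .dis Q (C.fill P)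
  | .conL C Q, P => .con (C.fill P) Q
  | .conR Q C, P => .con Q (C.fill P)

/-- Names of the inference rules of SKSg and SKS. -/
inductive Rule : Type where
  | iDown | iUp | wDown | wUp | cDown | cUp | s | m
  | aiDown | aiUp | awDown | awUp | acDown | acUp
deriving DecidableEq

/-- The rules, read at the root of a formula (premise on the left,
conclusion on the right). -/
inductive RootStep : Rule → F → F → Prop where
  | iDown (P : F) : RootStep .iDown .tt (.dis P P.negF)
  | iUp (P : F) : RootStep .iUp (.con P P.negF) .ff
  | wDown (P : F) : RootStep .wDown .ff P
  | wUp (P : F) : RootStep .wUp P .tt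
  | cDown (P : F) : RootStep .cDown (.dis P P) P
  | cUp (P : F) : RootStep .cUp P (.con P P)
  | s (P Q R : F) : RootStep .s (.con P (.dis Q R)) (.dis (.con P Q) R)
  | m (P Q R S : F) :
      RootStep .m (.dis (.con P Q) (.con R S)) (.con (.dis P R) (.dis Q S))
  | aiDown (A : F) (h : A.isAtom) : RootStep .aiDown .tt (.dis A A.negF)
  | aiUp (A : F) (h : A.isAtom) : RootStep .aiUp (.con A A.negF) .ff
  | awDown (A : F) (h : A.isAtom) : RootStep .awDown .ff A
  | awUp (A : F) (h : A.isAtom) : RootStep .awUp A .tt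
  | acDown (A : F) (h : A.isAtom) : RootStep .acDown (.dis A A) A
  | acUp (A : F) (h : A.isAtom) : RootStep .acUp A (.con A A)

/-- One inference step using a rule from the set `Rs`, applied inside an
arbitrary context and modulo the equivalence. -/
def Step (Rs : Set Rule) (P Q : F) : Prop :=
  ∃ r ∈ Rs, ∃ (C : Ctx) (P' Q' : F),
    RootStep r P' Q' ∧ Equiv P (C.fill P') ∧ Equiv (C.fill Q') Q

/-- Derivations over an arbitrary step relation: a finite sequence of rule
instances from the premise to the conclusion (modulo the equivalence). -/
inductive Deriv (St : F → F → Prop) : F → F → Prop where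
  | eqv {P Q : F} : Equiv P Q → Deriv St P Q
  | step {P Q R : F} : St P Q → Deriv St Q R → Deriv St P R

/-- The system SKSg: general (non-atomic) rules plus switch. -/
def SKSg : Set Rule := {.iDown, .iUp, .wDown, .wUp, .cDown, .cUp, .s}

/-- The system SKS: atomic rules plus switch and medial. -/
def SKS : Set Rule := {.aiDown, .aiUp, .awDown, .awUp, .acDown, .acUp, .s, .m}

/-- The system KS: the down fragment of SKS. -/
def KS : Set Rule := {.aiDown, .awDown, .acDown, .s, .m}

/-- A proof of `Q` in the system `Rs` is a derivation from the unit `t` to `Q`. -/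
def Proof (Rs : Set Rule) (Q : F) : Prop := Deriv (Step Rs) .tt Q

/-- A rule `r` is derivable from a set `Rs` of rules if every instance of `r`
(with premise `P` and conclusion `Q`) can be replaced by a derivation from
`P` to `Q` using only rules of `Rs`. -/
def RuleDerivable (r : Rule) (Rs : Set Rule) : Prop :=
  ∀ P Q : F, Step {r} P Q → Deriv (Step Rs) P Q

end DI

namespace DI

/-- The dual of a rule, obtained by exchanging premise and conclusion and
negating both.  The switch `s` and the medial `m` are self-dual. -/
def Rule.dual : Rule → Rule
  | .iDown => .iUp
  | .iUp => .iDown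
  | .wDown => .wUp
  | .wUp => .wDown
  | .cDown => .cUp
  | .cUp => .cDown
  | .s => .s
  | .m => .m
  | .aiDown => .aiUp
  | .aiUp => .aiDown
  | .awDown => .awUp
  | .awUp => .awDown
  | .acDown => .acUp
  | .acUp => .acDown

/-!
Contraposition is derivable from `i↓`, `i↑` and `s`: a derivation from `¬Q` to `¬P` yields
`P = (P,t) ⟶ (P,[Q,¬Q]) ⟶ (P,[Q,¬P]) = (P,[¬P,Q]) ⟶ [(P,¬P),Q] ⟶ [f,Q] = Q`.
When `P ⟶ Q` is an instance of a rule, `¬Q ⟶ ¬P` is an instance of the dual rule.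
-/

theorem F.isAtom.negF {A : F} (h : A.isAtom) : A.negF.isAtom := by
  cases A with
  | pos | neg => trivial
  | tt | ff | dis | con => exact h.elim

/-- Composition of contexts: `D` is plugged into the hole of `C`. -/
def Ctx.comp : Ctx → Ctx → Ctx
  | .hole, D => D
  | .disL C Q, D => .disL (C.comp D) Q
  | .disR Q C, D => .disR Q (C.comp D)
  | .conL C Q, D => .conL (C.comp D) Q
  | .conR Q C, D => .conR Q (C.comp D)

theorem Ctx.fill_comp (C D : Ctx) (P : F) : (C.comp D).fill P = C.fill (D.fill P) := by
  induction C <;> simp_all only [Ctx.comp, Ctx.fill]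

theorem Equiv.fill {P Q : F} (h : Equiv P Q) (C : Ctx) : Equiv (C.fill P) (C.fill Q) := by
  induction C with
  | hole => exact h
  | disL C R ih => exact .disCongr ih (.refl R)
  | disR R C ih => exact .disCongr (.refl R) ih
  | conL C R ih => exact .conCongr ih (.refl R)
  | conR R C ih => exact .conCongr (.refl R) ih

section Derivations

variable {Rs : Set Rule} {P Q R : F}

theorem RootStep.deriv {r : Rule} (h : RootStep r P Q) (hr : r ∈ Rs) (C : Ctx) :
    Deriv (Step Rs) (C.fill P) (C.fill Q) :=
  .step ⟨r, hr, C, P, Q, h, .refl _, .refl _⟩ (.eqv (.refl _))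

theorem Step.fill (h : Step Rs P Q) (C : Ctx) : Step Rs (C.fill P) (C.fill Q) := by
  obtain ⟨r, hr, D, P', Q', hroot, hP, hQ⟩ := h
  refine ⟨r, hr, C.comp D, P', Q', hroot, ?_, ?_⟩
  · rw [Ctx.fill_comp]
    exact hP.fill C
  · rw [Ctx.fill_comp]
    exact hQ.fill C

theorem Equiv.trans_step (h : Equiv P Q) (hs : Step Rs Q R) : Step Rs P R := by
  obtain ⟨r, hr, C, Q', R', hroot, hQ, hR⟩ := hs
  exact ⟨r, hr, C, Q', R', hroot, h.trans hQ, hR⟩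

theorem Equiv.trans_deriv (h : Equiv P Q) (hd : Deriv (Step Rs) Q R) : Deriv (Step Rs) P R := by
  cases hd with
  | eqv hQR => exact .eqv (h.trans hQR)
  | step hstep hrest => exact .step (h.trans_step hstep) hrest

theorem Deriv.trans (h₁ : Deriv (Step Rs) P Q) (h₂ : Deriv (Step Rs) Q R) :
    Deriv (Step Rs) P R := by
  induction h₁ with
  | eqv h => exact h.trans_deriv h₂
  | step hstep _ ih => exact .step hstep (ih h₂)

instance : Trans (Deriv (Step Rs)) (Deriv (Step Rs)) (Deriv (Step Rs)) := ⟨Deriv.trans⟩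

theorem Deriv.fill (h : Deriv (Step Rs) P Q) (C : Ctx) :
    Deriv (Step Rs) (C.fill P) (C.fill Q) := by
  induction h with
  | eqv h => exact .eqv (h.fill C)
  | step hstep _ ih => exact .step (hstep.fill C) ih

theorem RuleDerivable.of_rootStep {r : Rule}
    (h : ∀ {P Q : F}, RootStep r P Q → Deriv (Step Rs) P Q) : RuleDerivable r Rs := by
  rintro P Q ⟨_, rfl, C, P', Q', hroot, hP, hQ⟩
  calc
    Deriv (Step Rs) P (C.fill P') := .eqv hP
    Deriv (Step Rs) _ (C.fill Q') := (h hroot).fill C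
    Deriv (Step Rs) _ Q := .eqv hQ

theorem Deriv.of_negF (hi : .iDown ∈ Rs) (hc : .iUp ∈ Rs) (hs : .s ∈ Rs)
    (h : Deriv (Step Rs) Q.negF P.negF) : Deriv (Step Rs) P Q :=
  calc
    Deriv (Step Rs) P (.con P .tt) := .eqv ((Equiv.ttCon P).symm.trans (.conComm .tt P))
    Deriv (Step Rs) _ (.con P (.dis Q Q.negF)) := (RootStep.iDown Q).deriv hi (.conR P .hole)
    Deriv (Step Rs) _ (.con P (.dis Q P.negF)) := h.fill (.conR P (.disR Q .hole))
    Deriv (Step Rs) _ (.con P (.dis P.negF Q)) := .eqv (.conCongr (.refl P) (.disComm Q P.negF))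
    Deriv (Step Rs) _ (.dis (.con P P.negF) Q) := (RootStep.s P P.negF Q).deriv hs .hole
    Deriv (Step Rs) _ (.dis .ff Q) := (RootStep.iUp P).deriv hc (.disL .hole Q)
    Deriv (Step Rs) _ Q := .eqv (.ffDis Q)

theorem Deriv.dual_switch (hs : .s ∈ Rs) (P Q R : F) :
    Deriv (Step Rs) (.con (.dis P Q) R) (.dis P (.con Q R)) :=
  calc
    Deriv (Step Rs) (.con (.dis P Q) R) (.con R (.dis Q P)) :=
      .eqv ((Equiv.conComm _ R).trans (.conCongr (.refl R) (.disComm P Q)))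
    Deriv (Step Rs) _ (.dis (.con R Q) P) := (RootStep.s R Q P).deriv hs .hole
    Deriv (Step Rs) _ (.dis P (.con Q R)) :=
      .eqv ((Equiv.disComm _ P).trans (.disCongr (.refl P) (.conComm R Q)))

theorem RootStep.deriv_negF {r : Rule} (h : RootStep r P Q) (hr : r.dual ∈ Rs) :
    Deriv (Step Rs) Q.negF P.negF := by
  cases h with
  | s P Q R => exact .dual_switch hr P.negF Q.negF R.negF
  | m P Q R S => exact (RootStep.m P.negF R.negF Q.negF S.negF).deriv hr .hole
  | iDown P => exact (RootStep.iUp P.negF).deriv hr .hole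
  | iUp P => exact (RootStep.iDown P.negF).deriv hr .hole
  | wDown => exact (RootStep.wUp _).deriv hr .hole
  | wUp => exact (RootStep.wDown _).deriv hr .hole
  | cDown => exact (RootStep.cUp _).deriv hr .hole
  | cUp => exact (RootStep.cDown _).deriv hr .hole
  | aiDown A hA => exact (RootStep.aiUp A.negF hA.negF).deriv hr .hole
  | aiUp A hA => exact (RootStep.aiDown A.negF hA.negF).deriv hr .hole
  | awDown _ hA => exact (RootStep.awUp _ hA.negF).deriv hr .hole
  | awUp _ hA => exact (RootStep.awDown _ hA.negF).deriv hr .hole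
  | acDown _ hA => exact (RootStep.acUp _ hA.negF).deriv hr .hole
  | acUp _ hA => exact (RootStep.acDown _ hA.negF).deriv hr .hole

end Derivations

theorem sks_rule_from_dual_general (r : Rule) : RuleDerivable r {r.dual, .iDown, .iUp, .s} :=
  .of_rootStep fun h =>
    .of_negF (by simp) (by simp) (by simp) (h.deriv_negF (Set.mem_insert r.dual _))

/-- Every rule of SKS is derivable using only its dual rule, the general identity
`i↓`, the general cut `i↑` and the switch `s`; in particular the self-dual
rules `s` and `m` are trivially derivable from themselves. -/
theorem sks_rule_from_dual :
    ∀ r ∈ SKS, RuleDerivable r {r.dual, .iDown, .iUp, .s} :=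
  fun r _ => sks_rule_from_dual_general r

end DI
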